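/- Let u₀(x) = ln(1 − ln|x|) on the unit disk B₁(0) ⊂ ℝ². Then u₀ ∈ W^{1,2}(B₁(0)) with ∫_{B₁(0)} |∇u₀|² dx = 2π, and u₀ satisfies −Δu₀ = |∇u₀|² in the sense of distributions on the whole disk B₁(0): for every φ ∈ C_c^∞(B₁(0)), ∫_{B₁(0)} ∇u₀ · ∇φ dx = ∫_{B₁(0)} |∇u₀|² φ dx. Consequently the time-independent function u(t,x) = u₀(x) is a weak solution of ∂ₜu − Δu = |∇u|² on (0,∞)×B₁(0). -/

import Mathlib

open MeasureTheory Set Metric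

noncomputable section

/-- Partial derivative of a scalar function on `ℝ²` in the `i`-th coordinate
direction. -/
def pd (i : Fin 2) (g : EuclideanSpace ℝ (Fin 2) → ℝ) :
    EuclideanSpace ℝ (Fin 2) → ℝ :=
  fun x => fderiv ℝ g x (EuclideanSpace.single i 1)

/-- Time derivative of a function on `ℝ × ℝ²`. -/
def pT (w : ℝ × EuclideanSpace ℝ (Fin 2) → ℝ) :
    ℝ × EuclideanSpace ℝ (Fin 2) → ℝ :=
  fun p => deriv (fun s => w (s, p.2)) p.1

/-!
For `u₀(x) = log (1 - log ‖x‖)` the quantity `W(r) = r u₀'(r) = -1 / (1 - log r)` measures the flux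
of `∇u₀` through the circle of radius `r`, and off the origin `-Δu₀ = |∇u₀|²` is the Riccati
equation `W' = -W² / r`. Integrating by parts along each ray, in polar coordinates, produces the
distributional identity with a boundary term at the origin proportional to `lim_{r → 0⁺} W(r)`.
This limit is `0`, so no Dirac mass appears, while `∫₀¹ W² / r dr = W(0⁺) - W(1) = 1` is the energy
per unit angle.

The pointwise gradient is the weak one because a line through the origin is null in the plane, and
every other line avoids the singularity. For a stationary function, the time derivative of a test
function integrates to zero on each line `x = const`, so the parabolic equation reduces to the
elliptic one on each time slice.
-/

open Filter Topology Module
open scoped Gradient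

theorem integrable_mul_of_hasCompactSupport {X : Type*} [TopologicalSpace X] [MeasurableSpace X]
    [OpensMeasurableSpace X] {μ : Measure X} {f g : X → ℝ} (hf : Integrable f μ)
    (hg : Continuous g) (hgc : HasCompactSupport g) : Integrable (fun x ↦ f x * g x) μ := by
  obtain ⟨C, hC⟩ := hgc.exists_bound_of_continuous hg
  exact hf.mul_bdd hg.aestronglyMeasurable (.of_forall hC)

theorem integral_ray_eq_neg_limit_mul {E : Type*} [NormedAddCommGroup E] [NormedSpace ℝ E]
    {W W' : ℝ → ℝ} {φ : E → ℝ} {c R : ℝ} (hR : 0 < R)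
    (hderiv : ∀ r ∈ Ioo 0 R, HasDerivAt W (W' r) r) (hlim : Tendsto W (𝓝[>] 0) (𝓝 c))
    (hW : IntegrableOn W (Ioo 0 R)) (hW' : IntegrableOn W' (Ioo 0 R))
    (hφ : ContDiff ℝ 1 φ) (hφc : HasCompactSupport φ) {ω : E} (hω : R • ω ∉ tsupport φ) :
    ∫ r in Ioo 0 R, (W' r * φ (r • ω) + W r * fderiv ℝ φ (r • ω) ω) = -(c * φ 0) := by
  have hray : Continuous fun r : ℝ ↦ r • ω := by fun_prop
  have hφray (r : ℝ) : HasDerivAt (fun r : ℝ ↦ φ (r • ω)) (fderiv ℝ φ (r • ω) ω) r := by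
    have hline : HasDerivAt (fun r : ℝ ↦ r • ω) ω r := by
      simpa using (hasDerivAt_id r).smul_const ω
    exact (hφ.differentiable one_ne_zero _).hasFDerivAt.comp_hasDerivAt r hline
  have hdφ : Continuous (fderiv ℝ φ · ω) :=
    (hφ.continuous_fderiv one_ne_zero).clm_apply continuous_const
  obtain ⟨C, hC⟩ := hφc.exists_bound_of_continuous hφ.continuous
  obtain ⟨D, hD⟩ := (hφc.fderiv_apply ℝ ω).exists_bound_of_continuous hdφ
  have hint : IntegrableOn (fun r ↦ W' r * φ (r • ω) + W r * fderiv ℝ φ (r • ω) ω) (Ioo 0 R) :=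
    (hW'.mul_bdd (hφ.continuous.comp hray).aestronglyMeasurable (.of_forall fun _ ↦ hC _)).add
      (hW.mul_bdd (hdφ.comp hray).aestronglyMeasurable (.of_forall fun _ ↦ hD _))
  have hzero : Tendsto (fun r ↦ W r * φ (r • ω)) (𝓝[>] 0) (𝓝 (c * φ 0)) := by
    have := (hφ.continuous.comp hray).tendsto 0
    simp only [Function.comp_apply, zero_smul] at this
    exact hlim.mul (this.mono_left nhdsWithin_le_nhds)
  have hboundary : Tendsto (fun r ↦ W r * φ (r • ω)) (𝓝[<] R) (𝓝 0) := by
    refine tendsto_const_nhds.congr' ?_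
    filter_upwards [nhdsWithin_le_nhds (hray.continuousAt.eventually
      (notMem_tsupport_iff_eventuallyEq.1 hω))] with r hr
    simp [hr]
  rw [← integral_Ioc_eq_integral_Ioo, ← intervalIntegral.integral_of_le hR.le,
    intervalIntegral.integral_eq_sub_of_hasDerivAt_of_tendsto hR
      (fun r hr ↦ (hderiv r hr).mul (hφray r))
      ((intervalIntegrable_iff_integrableOn_Ioo_of_le hR.le).2 hint) hzero hboundary, zero_sub]

section Polar

variable {E : Type*} [NormedAddCommGroup E] [NormedSpace ℝ E] [FiniteDimensional ℝ E]
  [Nontrivial E] [MeasurableSpace E] [BorelSpace E] (μ : Measure E) [μ.IsAddHaarMeasure]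

theorem integral_eq_integral_toSphere {F : Type*} [NormedAddCommGroup F] [NormedSpace ℝ F]
    {g : E → F} (hg : Integrable g μ) :
    ∫ x, g x ∂μ =
      ∫ ω, (∫ r in Ioi (0 : ℝ), r ^ (finrank ℝ E - 1) • g (r • (ω : E))) ∂μ.toSphere := by
  have hpolar := μ.measurePreserving_homeomorphUnitSphereProd.symm
    (homeomorphUnitSphereProd E).toMeasurableEquiv
  have hemb := (homeomorphUnitSphereProd E).symm.measurableEmbedding
  have hpunctured : Integrable (fun x : ({0}ᶜ : Set E) ↦ g x) (μ.comap (↑)) := by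
    rwa [← restrict_compl_singleton (μ := μ) 0, ← IntegrableOn,
      integrableOn_iff_comap_subtypeVal (measurableSet_singleton _).compl] at hg
  have hradial (h : ℝ → F) :
      ∫ r : Ioi (0 : ℝ), h r ∂.volumeIoiPow (finrank ℝ E - 1) =
        ∫ r in Ioi (0 : ℝ), r ^ (finrank ℝ E - 1) • h r := by
    simp only [Measure.volumeIoiPow, ENNReal.ofReal]
    rw [integral_withDensity_eq_integral_smul
        (measurable_subtype_coe.pow_const _).real_toNNReal,
      integral_subtype_comap measurableSet_Ioi
        fun r ↦ Real.toNNReal (r ^ (finrank ℝ E - 1)) • h r]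
    refine setIntegral_congr_fun measurableSet_Ioi fun r hr ↦ ?_
    simp only [NNReal.smul_def, Real.coe_toNNReal _ (pow_nonneg (le_of_lt hr) _)]
  calc
    ∫ x, g x ∂μ = ∫ x : ({0}ᶜ : Set E), g x ∂μ.comap (↑) := by
      rw [integral_subtype_comap (measurableSet_singleton _).compl, restrict_compl_singleton]
    _ = ∫ p : sphere (0 : E) 1 × Ioi (0 : ℝ), g ((p.2 : ℝ) • (p.1 : E))
          ∂μ.toSphere.prod (.volumeIoiPow (finrank ℝ E - 1)) := by
      simpa using (hpolar.integral_comp hemb fun x : ({0}ᶜ : Set E) ↦ g x).symm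
    _ = _ := by
      rw [integral_prod _ (by simpa [Function.comp_def] using
        (hpolar.integrable_comp_emb hemb).2 hpunctured)]
      exact integral_congr_ae (.of_forall fun ω ↦ hradial fun r ↦ g (r • (ω : E)))

theorem setIntegral_ball_eq_integral_toSphere {F : Type*} [NormedAddCommGroup F]
    [NormedSpace ℝ F] {g : E → F} {R : ℝ} (hg : IntegrableOn g (ball 0 R) μ) :
    ∫ x in ball 0 R, g x ∂μ =
      ∫ ω, (∫ r in Ioo 0 R, r ^ (finrank ℝ E - 1) • g (r • (ω : E))) ∂μ.toSphere := by
  rw [← integral_indicator measurableSet_ball,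
    integral_eq_integral_toSphere μ (hg.integrable_indicator measurableSet_ball)]
  congr with ω
  rw [← Ioi_inter_Iio, ← setIntegral_indicator measurableSet_Iio]
  refine setIntegral_congr_fun measurableSet_Ioi fun r (hr : 0 < r) ↦ ?_
  have hmem : r • (ω : E) ∈ ball 0 R ↔ r < R := by simp [norm_smul, abs_of_pos hr]
  by_cases h : r < R
  · simp [indicator_of_mem (hmem.2 h), h]
  · simp [indicator_of_notMem (mt hmem.1 h), h]

variable {W W' : ℝ → ℝ} {φ : E → ℝ} {c R : ℝ}

theorem integrableOn_ball_fun_norm_div_pow (hW : IntegrableOn W (Ioo 0 R)) :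
    IntegrableOn (fun x : E ↦ W ‖x‖ / ‖x‖ ^ (finrank ℝ E - 1)) (ball 0 R) μ := by
  refine (integrableOn_fun_norm_addHaar (f := fun r ↦ W r / r ^ (finrank ℝ E - 1)) μ).2 ?_
  refine hW.congr_fun (fun r hr ↦ ?_) measurableSet_Ioo
  have : r ^ (finrank ℝ E - 1) ≠ 0 := pow_ne_zero _ hr.1.ne'
  simp only [smul_eq_mul]
  field_simp

theorem setIntegral_ball_fun_norm_div_pow (hW : IntegrableOn W (Ioo 0 R)) :
    ∫ x in ball (0 : E) R, W ‖x‖ / ‖x‖ ^ (finrank ℝ E - 1) ∂μ =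
      μ.toSphere.real univ * ∫ r in Ioo 0 R, W r := by
  rw [setIntegral_ball_eq_integral_toSphere μ (integrableOn_ball_fun_norm_div_pow μ hW),
    ← smul_eq_mul, ← integral_const]
  congr with ω
  refine setIntegral_congr_fun measurableSet_Ioo fun r hr ↦ ?_
  have hr0 : r ≠ 0 := hr.1.ne'
  simp only [norm_smul, norm_eq_of_mem_sphere, Real.norm_of_nonneg hr.1.le, mul_one, smul_eq_mul]
  field_simp

theorem integrableOn_ball_flux_mul_fderiv (hW : IntegrableOn W (Ioo 0 R))
    (hφ : ContDiff ℝ 1 φ) (hφc : HasCompactSupport φ) :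
    IntegrableOn (fun x ↦ W ‖x‖ / ‖x‖ ^ (finrank ℝ E - 1) * fderiv ℝ φ x (‖x‖⁻¹ • x))
      (ball 0 R) μ := by
  have hdφ := hφ.continuous_fderiv one_ne_zero
  obtain ⟨C, hC⟩ := (hφc.fderiv ℝ).exists_bound_of_continuous hdφ
  have hmeas : Measurable fun x : E ↦ fderiv ℝ φ x (‖x‖⁻¹ • x) :=
    ((hdφ.comp continuous_fst).clm_apply continuous_snd).measurable.comp
      (measurable_id.prodMk (by fun_prop))
  refine (integrableOn_ball_fun_norm_div_pow μ hW).mul_bdd (c := C)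
    hmeas.aestronglyMeasurable (.of_forall fun x ↦ ?_)
  calc ‖fderiv ℝ φ x (‖x‖⁻¹ • x)‖ ≤ ‖fderiv ℝ φ x‖ * ‖‖x‖⁻¹ • x‖ := (fderiv ℝ φ x).le_opNorm _
    _ ≤ ‖fderiv ℝ φ x‖ * 1 := by
      gcongr
      simpa [norm_smul] using inv_mul_le_one (a := ‖x‖)
    _ ≤ C := by simpa using hC x

theorem setIntegral_ball_radial_flux (hR : 0 < R)
    (hderiv : ∀ r ∈ Ioo 0 R, HasDerivAt W (W' r) r) (hlim : Tendsto W (𝓝[>] 0) (𝓝 c))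
    (hW : IntegrableOn W (Ioo 0 R)) (hW' : IntegrableOn W' (Ioo 0 R))
    (hφ : ContDiff ℝ 1 φ) (hφc : HasCompactSupport φ) (hφR : tsupport φ ⊆ ball 0 R) :
    ∫ x in ball 0 R, W ‖x‖ / ‖x‖ ^ (finrank ℝ E - 1) * fderiv ℝ φ x (‖x‖⁻¹ • x) ∂μ =
      -∫ x in ball 0 R, W' ‖x‖ / ‖x‖ ^ (finrank ℝ E - 1) * φ x ∂μ
        - μ.toSphere.real univ * (c * φ 0) := by
  have hsource := integrable_mul_of_hasCompactSupport
    (integrableOn_ball_fun_norm_div_pow μ hW') hφ.continuous hφc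
  have hflux := integrableOn_ball_flux_mul_fderiv μ hW hφ hφc
  suffices ∫ x in ball 0 R, (W' ‖x‖ / ‖x‖ ^ (finrank ℝ E - 1) * φ x
      + W ‖x‖ / ‖x‖ ^ (finrank ℝ E - 1) * fderiv ℝ φ x (‖x‖⁻¹ • x)) ∂μ =
      -(μ.toSphere.real univ * (c * φ 0)) by
    rw [integral_add hsource hflux] at this
    linarith
  rw [setIntegral_ball_eq_integral_toSphere μ (by exact hsource.add hflux), ← mul_neg,
    ← smul_eq_mul, ← integral_const]
  congr with ω
  have hω : R • (ω : E) ∉ tsupport φ := fun h ↦ by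
    simpa [norm_smul, abs_of_pos hR] using hφR h
  rw [← integral_ray_eq_neg_limit_mul hR hderiv hlim hW hW' hφ hφc hω]
  refine setIntegral_congr_fun measurableSet_Ioo fun r hr ↦ ?_
  have hr0 : r ≠ 0 := hr.1.ne'
  simp only [norm_smul, norm_eq_of_mem_sphere, Real.norm_of_nonneg hr.1.le, mul_one,
    inv_smul_smul₀ hr0, smul_eq_mul]
  field_simp

end Polar

section WeakDerivative

theorem hasLineDerivAt_indicator {E : Type*} [AddCommGroup E] [Module ℝ E] {A : Set E}
    {f f' : E → ℝ} {x v : E} (hA : ∀ t : ℝ, x + t • v ∈ A ↔ x ∈ A)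
    (hf : x ∈ A → HasLineDerivAt ℝ f (f' x) x v) :
    HasLineDerivAt ℝ (A.indicator f) (A.indicator f' x) x v := by
  by_cases hx : x ∈ A
  · simpa [HasLineDerivAt, indicator_apply, hA, hx] using hf hx
  · simpa [HasLineDerivAt, indicator_apply, hA, hx] using hasDerivAt_const (0 : ℝ) (0 : ℝ)

variable {E : Type*} [NormedAddCommGroup E] [NormedSpace ℝ E] [FiniteDimensional ℝ E]
  [MeasurableSpace E] [BorelSpace E] {μ : Measure E} [μ.IsAddHaarMeasure]

theorem measure_biUnion_line_eq_zero (hE : 1 < finrank ℝ E) {S : Set E} (hS : S.Countable)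
    (v : E) : μ (⋃ a ∈ S, AffineSubspace.mk' a (ℝ ∙ v)) = 0 := by
  refine (measure_biUnion_null_iff hS).2 fun a _ ↦ μ.addHaar_affineSubspace _ fun htop ↦ ?_
  have hspan : (ℝ ∙ v) = ⊤ := by simpa using congrArg AffineSubspace.direction htop
  have hle : finrank ℝ (ℝ ∙ v) ≤ 1 := by simpa using finrank_span_le_card (R := ℝ) {v}
  rw [hspan, finrank_top] at hle
  omega

theorem integral_mul_fderiv_eq_neg_fderiv_mul_off_countable (hE : 1 < finrank ℝ E)
    {S : Set E} (hS : S.Countable) {f g : E → ℝ} {v : E}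
    (hf'g : Integrable (fun x ↦ fderiv ℝ f x v * g x) μ)
    (hfg' : Integrable (fun x ↦ f x * fderiv ℝ g x v) μ)
    (hfg : Integrable (fun x ↦ f x * g x) μ)
    (hf : ∀ x ∈ tsupport g \ S, DifferentiableAt ℝ f x) (hg : Differentiable ℝ g) :
    ∫ x, f x * fderiv ℝ g x v ∂μ = -∫ x, fderiv ℝ f x v * g x ∂μ := by
  -- Zeroing `f` on the lines through `S` in direction `v` changes it only on a null set and
  -- makes it differentiable along `v` everywhere.
  set A : Set E := (⋃ a ∈ S, AffineSubspace.mk' a (ℝ ∙ v))ᶜ with hA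
  have hA_ae : ∀ᵐ x ∂μ, x ∈ A := compl_mem_ae_iff.2 (measure_biUnion_line_eq_zero hE hS v)
  have hA_add (x : E) (t : ℝ) : x + t • v ∈ A ↔ x ∈ A := by
    have hmem (a : E) : x + t • v - a ∈ ℝ ∙ v ↔ x - a ∈ ℝ ∙ v := by
      rw [add_sub_right_comm]
      exact (ℝ ∙ v).add_mem_iff_left (Submodule.mem_span_singleton.2 ⟨t, rfl⟩)
    simp [hA, AffineSubspace.mem_mk', hmem]
  have hSA {x : E} (hx : x ∈ A) : x ∉ S := fun hxS ↦
    hx (mem_biUnion hxS (AffineSubspace.self_mem_mk' x _))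
  have hae (h : E → ℝ) : A.indicator h =ᵐ[μ] h := by
    filter_upwards [hA_ae] with x hx using indicator_of_mem hx h
  have key := integral_bilinear_hasLineDerivAt_right_eq_neg_left_of_integrable
    (μ := μ) (B := ContinuousLinearMap.mul ℝ ℝ) (v := v) (f := A.indicator f)
    (f' := A.indicator (fderiv ℝ f · v)) (g := g) (g' := (fderiv ℝ g · v))
    (hf'g.congr ((hae _).symm.mul .rfl)) (hfg'.congr ((hae f).symm.mul .rfl))
    (hfg.congr ((hae f).symm.mul .rfl))
    (fun x hx ↦ hasLineDerivAt_indicator (hA_add x) fun hxA ↦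
      (hf x ⟨hx, hSA hxA⟩).hasFDerivAt.hasLineDerivAt v)
    (fun x _ ↦ (hg x).hasFDerivAt.hasLineDerivAt v)
  calc ∫ x, f x * fderiv ℝ g x v ∂μ = ∫ x, A.indicator f x * fderiv ℝ g x v ∂μ :=
        integral_congr_ae ((hae f).symm.mul .rfl)
    _ = -∫ x, A.indicator (fderiv ℝ f · v) x * g x ∂μ := key
    _ = -∫ x, fderiv ℝ f x v * g x ∂μ :=
        congrArg Neg.neg (integral_congr_ae ((hae _).mul .rfl))

theorem setIntegral_mul_fderiv_eq_neg_fderiv_mul_off_countable (hE : 1 < finrank ℝ E)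
    {S Ω : Set E} (hS : S.Countable) {f φ : E → ℝ} {v : E}
    (hf : ∀ x ∈ Ω \ S, DifferentiableAt ℝ f x) (hfΩ : IntegrableOn f Ω μ)
    (hf'Ω : IntegrableOn (fderiv ℝ f · v) Ω μ) (hφ : ContDiff ℝ 1 φ)
    (hφc : HasCompactSupport φ) (hφΩ : tsupport φ ⊆ Ω) :
    ∫ x in Ω, f x * fderiv ℝ φ x v ∂μ = -∫ x in Ω, fderiv ℝ f x v * φ x ∂μ := by
  have hφ' : Continuous (fderiv ℝ φ · v) :=
    (hφ.continuous_fderiv one_ne_zero).clm_apply continuous_const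
  have hφ'Ω : tsupport (fderiv ℝ φ · v) ⊆ Ω := (tsupport_fderiv_apply_subset ℝ v).trans hφΩ
  have hsupp {h g : E → ℝ} (hg : tsupport g ⊆ Ω) :
      Function.support (fun x ↦ h x * g x) ⊆ Ω :=
    (Function.support_mul_subset_right h g).trans ((subset_tsupport g).trans hg)
  have hint {h g : E → ℝ} (hh : IntegrableOn h Ω μ) (hg : Continuous g)
      (hgc : HasCompactSupport g) (hgΩ : tsupport g ⊆ Ω) : Integrable (fun x ↦ h x * g x) μ :=
    (integrableOn_iff_integrable_of_support_subset (hsupp hgΩ)).1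
      (integrable_mul_of_hasCompactSupport hh hg hgc)
  have hset (h : E → ℝ) {g : E → ℝ} (hg : tsupport g ⊆ Ω) :
      ∫ x in Ω, h x * g x ∂μ = ∫ x, h x * g x ∂μ :=
    setIntegral_eq_integral_of_forall_compl_eq_zero fun x hx ↦
      Function.notMem_support.1 fun hxs ↦ hx (hsupp hg hxs)
  rw [hset f hφ'Ω, hset (fderiv ℝ f · v) hφΩ]
  exact integral_mul_fderiv_eq_neg_fderiv_mul_off_countable hE hS
    (hint hf'Ω hφ.continuous hφc hφΩ) (hint hfΩ hφ' (hφc.fderiv_apply ℝ v) hφ'Ω)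
    (hint hfΩ hφ.continuous hφc hφΩ)
    (fun x hx ↦ hf x ⟨hφΩ hx.1, hx.2⟩) (hφ.differentiable one_ne_zero)

end WeakDerivative

theorem integrableOn_Ioo_deriv_of_nonneg_of_tendsto {f f' : ℝ → ℝ} {a b l m : ℝ}
    (hderiv : ∀ x ∈ Ioo a b, HasDerivAt f (f' x) x) (hnonneg : ∀ x ∈ Ioo a b, 0 ≤ f' x)
    (ha : Tendsto f (𝓝[>] a) (𝓝 l)) (hb : Tendsto f (𝓝[<] b) (𝓝 m)) :
    IntegrableOn f' (Ioo a b) := by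
  have hcont : ContinuousOn f (Ioo a b) := fun x hx ↦ (hderiv x hx).continuousAt.continuousWithinAt
  have hext (x : ℝ) (hx : x ∈ Ioo a b) : HasDerivAt (extendFrom (Ioo a b) f) (f' x) x :=
    (hderiv x hx).congr_of_eventuallyEq <| by
      filter_upwards [Ioo_mem_nhds hx.1 hx.2] with y hy
        using extendFrom_eq (subset_closure hy) (hcont y hy)
  exact (intervalIntegral.integrableOn_deriv_of_nonneg
    (continuousOn_Icc_extendFrom_Ioo hcont ha hb) hext hnonneg).mono_set Ioo_subset_Ioc_self

/-- `r ↦ r · (d/dr) log (1 - log r)`: up to the factor `2π`, the flux of `∇ logLog` through the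
circle of radius `r` in the plane. -/
def logLogFlux (r : ℝ) : ℝ := -(1 - Real.log r)⁻¹

theorem one_lt_one_sub_log {r : ℝ} (hr : r ∈ Ioo 0 1) : 1 < 1 - Real.log r := by
  linarith [Real.log_neg hr.1 hr.2]

theorem hasDerivAt_log_one_sub_log {r : ℝ} (hr : r ∈ Ioo 0 1) :
    HasDerivAt (fun r ↦ Real.log (1 - Real.log r)) (logLogFlux r / r) r := by
  have hv := one_lt_one_sub_log hr
  convert! ((Real.hasDerivAt_log hr.1.ne').const_sub 1).log (by positivity) using 1
  rw [logLogFlux]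
  field_simp

/-- This Riccati equation is the radial form of `-Δu = |∇u|²` in the plane. -/
theorem hasDerivAt_logLogFlux {r : ℝ} (hr : r ∈ Ioo 0 1) :
    HasDerivAt logLogFlux (-(logLogFlux r ^ 2 / r)) r := by
  have hv := one_lt_one_sub_log hr
  convert! (((Real.hasDerivAt_log hr.1.ne').const_sub 1).inv (by positivity)).neg using 1
  rw [logLogFlux]
  field_simp

theorem hasDerivAt_neg_logLogFlux {r : ℝ} (hr : r ∈ Ioo 0 1) :
    HasDerivAt (fun r ↦ -logLogFlux r) (logLogFlux r ^ 2 / r) r := by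
  simpa only [neg_neg] using (hasDerivAt_logLogFlux hr).fun_neg

theorem tendsto_logLogFlux_zero : Tendsto logLogFlux (𝓝[>] 0) (𝓝 0) := by
  have hv : Tendsto (fun r ↦ 1 - Real.log r) (𝓝[>] 0) atTop :=
    tendsto_atTop_add_const_left _ 1 (tendsto_neg_atBot_atTop.comp Real.tendsto_log_nhdsGT_zero)
  have := (tendsto_inv_atTop_zero.comp hv).neg
  rwa [neg_zero] at this

theorem tendsto_logLogFlux_one : Tendsto logLogFlux (𝓝[<] 1) (𝓝 (-1)) := by
  have hcont : ContinuousAt logLogFlux 1 :=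
    ((Real.continuousAt_log one_ne_zero).const_sub 1 |>.inv₀ (by simp)).neg
  simpa [logLogFlux] using hcont.tendsto.mono_left nhdsWithin_le_nhds

theorem integrableOn_logLogFlux : IntegrableOn logLogFlux (Ioo 0 1) := by
  have hmeas : Measurable logLogFlux := by unfold logLogFlux; fun_prop
  refine .of_bound measure_Ioo_lt_top hmeas.aestronglyMeasurable 1 ?_
  filter_upwards [ae_restrict_mem measurableSet_Ioo] with r hr
  have hv := one_lt_one_sub_log hr
  rw [logLogFlux, norm_neg, norm_inv, Real.norm_of_nonneg (by positivity)]
  exact inv_le_one_of_one_le₀ hv.le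

theorem integrableOn_sq_logLogFlux_div :
    IntegrableOn (fun r ↦ logLogFlux r ^ 2 / r) (Ioo 0 1) :=
  integrableOn_Ioo_deriv_of_nonneg_of_tendsto
    (fun _ ↦ hasDerivAt_neg_logLogFlux)
    (fun _ hr ↦ div_nonneg (sq_nonneg _) hr.1.le)
    tendsto_logLogFlux_zero.neg tendsto_logLogFlux_one.neg

theorem setIntegral_sq_logLogFlux_div : ∫ r in Ioo 0 1, logLogFlux r ^ 2 / r = 1 := by
  rw [← integral_Ioc_eq_integral_Ioo, ← intervalIntegral.integral_of_le zero_le_one,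
    intervalIntegral.integral_eq_sub_of_hasDerivAt_of_tendsto zero_lt_one
      (fun _ ↦ hasDerivAt_neg_logLogFlux)
      ((intervalIntegrable_iff_integrableOn_Ioo_of_le zero_le_one).2
        integrableOn_sq_logLogFlux_div)
      tendsto_logLogFlux_zero.neg tendsto_logLogFlux_one.neg]
  norm_num

theorem sq_log_le_two_mul {v : ℝ} (hv : 1 ≤ v) : Real.log v ^ 2 ≤ 2 * v := by
  have hlog := Real.log_nonneg hv
  have := Real.quadratic_le_exp_of_nonneg hlog
  rw [Real.exp_log (by positivity)] at this
  linarith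

/-- The function `u₀(x) = log (1 - log ‖x‖)`; it is unbounded at the origin, where the junk value
`log 0 = 0` makes it vanish. -/
def logLog {E : Type*} [NormedAddCommGroup E] (x : E) : ℝ := Real.log (1 - Real.log ‖x‖)

section LogLogIntegrable

variable {E : Type*} [NormedAddCommGroup E] [NormedSpace ℝ E] [FiniteDimensional ℝ E]
  [Nontrivial E] [MeasurableSpace E] [BorelSpace E] (μ : Measure E) [μ.IsAddHaarMeasure]

theorem integrableOn_sq_logLog : IntegrableOn (fun x : E ↦ logLog x ^ 2) (ball 0 1) μ := by
  refine (integrableOn_fun_norm_addHaar (f := fun r ↦ Real.log (1 - Real.log r) ^ 2) μ).2 ?_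
  have hlog : IntegrableOn (fun r ↦ 2 * (1 - Real.log r)) (Ioo 0 1) :=
    ((intervalIntegrable_iff_integrableOn_Ioo_of_le zero_le_one).1
      (intervalIntegrable_const.sub intervalIntegral.intervalIntegrable_log')).const_mul 2
  refine hlog.mono' (Measurable.aestronglyMeasurable (by fun_prop)) ?_
  filter_upwards [ae_restrict_mem measurableSet_Ioo] with r hr
  calc ‖r ^ (finrank ℝ E - 1) • Real.log (1 - Real.log r) ^ 2‖
      = r ^ (finrank ℝ E - 1) * Real.log (1 - Real.log r) ^ 2 :=
        Real.norm_of_nonneg (mul_nonneg (pow_nonneg hr.1.le _) (sq_nonneg _))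
    _ ≤ 1 * (2 * (1 - Real.log r)) := by
      gcongr
      · exact pow_le_one₀ hr.1.le hr.2.le
      · exact sq_log_le_two_mul (one_lt_one_sub_log hr).le
    _ = 2 * (1 - Real.log r) := one_mul _

theorem integrableOn_logLog : IntegrableOn (logLog : E → ℝ) (ball 0 1) μ := by
  have := isFiniteMeasure_restrict.2 (measure_ball_lt_top (μ := μ) (x := 0) (r := 1)).ne
  have hmeas : Measurable (logLog : E → ℝ) := by unfold logLog; fun_prop
  exact ((memLp_two_iff_integrable_sq hmeas.aestronglyMeasurable).2
    (integrableOn_sq_logLog μ)).integrable one_le_two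

end LogLogIntegrable

theorem ae_restrict_mem_diff_singleton {X : Type*} [MeasurableSpace X] {μ : Measure X}
    [NullSingletonClass μ] {s : Set X} (hs : MeasurableSet s) (a : X) :
    ∀ᵐ x ∂μ.restrict s, x ∈ s \ {a} := by
  filter_upwards [ae_restrict_mem hs, ae_restrict_of_ae (Measure.ae_ne μ a)]
    with x hx hxa using ⟨hx, hxa⟩

section Gradient

variable {E : Type*} [NormedAddCommGroup E] [InnerProductSpace ℝ E] [CompleteSpace E]

theorem hasGradientAt_comp_norm {f : ℝ → ℝ} {f' : ℝ} {x : E} (hx : x ≠ 0)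
    (hf : HasDerivAt f f' ‖x‖) : HasGradientAt (fun x ↦ f ‖x‖) (f' • ‖x‖⁻¹ • x) x := by
  have hx0 : ‖x‖ ≠ 0 := norm_ne_zero_iff.2 hx
  have hnorm : HasFDerivAt (fun x : E ↦ ‖x‖) (‖x‖⁻¹ • innerSL ℝ x) x := by
    have := (hasStrictFDerivAt_norm_sq x).hasFDerivAt.sqrt (pow_ne_zero 2 hx0)
    simp only [Real.sqrt_sq (norm_nonneg _)] at this
    convert! this using 1
    rw [← Nat.cast_smul_eq_nsmul ℝ, smul_smul]
    congr 1
    field_simp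
    norm_num
  rw [hasGradientAt_iff_hasFDerivAt]
  convert! hf.comp_hasFDerivAt x hnorm using 1
  ext y
  simp

theorem hasGradientAt_logLog {x : E} (hx : x ∈ ball 0 1 \ {0}) :
    HasGradientAt logLog ((logLogFlux ‖x‖ / ‖x‖) • ‖x‖⁻¹ • x) x :=
  hasGradientAt_comp_norm hx.2
    (hasDerivAt_log_one_sub_log ⟨norm_pos_iff.2 hx.2, by simpa using hx.1⟩)

theorem sq_norm_gradient_logLog {x : E} (hx : x ∈ ball 0 1 \ {0}) :
    ‖∇ logLog x‖ ^ 2 = (logLogFlux ‖x‖ / ‖x‖) ^ 2 := by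
  rw [(hasGradientAt_logLog hx).gradient, norm_smul, norm_smul, norm_inv, norm_norm,
    inv_mul_cancel₀ (norm_ne_zero_iff.2 hx.2), mul_one, Real.norm_eq_abs, sq_abs]

end Gradient

section Plane

variable {E : Type*} [NormedAddCommGroup E] [InnerProductSpace ℝ E] [FiniteDimensional ℝ E]
  [MeasurableSpace E] [BorelSpace E] {μ : Measure E} [μ.IsAddHaarMeasure]

theorem sq_norm_gradient_logLog_ae_eq (hE : finrank ℝ E = 2) :
    (fun x : E ↦ ‖∇ logLog x‖ ^ 2) =ᵐ[μ.restrict (ball 0 1)]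
      fun x ↦ (logLogFlux ‖x‖ ^ 2 / ‖x‖) / ‖x‖ ^ (finrank ℝ E - 1) := by
  have : Nontrivial E := nontrivial_of_finrank_eq_succ hE
  filter_upwards [ae_restrict_mem_diff_singleton measurableSet_ball 0] with x hx
  have hx0 : ‖x‖ ≠ 0 := norm_ne_zero_iff.2 hx.2
  rw [sq_norm_gradient_logLog hx, hE, Nat.add_one_sub_one, pow_one]
  field_simp

theorem integrableOn_sq_norm_gradient_logLog (hE : finrank ℝ E = 2) :
    IntegrableOn (fun x : E ↦ ‖∇ logLog x‖ ^ 2) (ball 0 1) μ := by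
  have : Nontrivial E := nontrivial_of_finrank_eq_succ hE
  exact (integrableOn_ball_fun_norm_div_pow μ integrableOn_sq_logLogFlux_div).congr
    (sq_norm_gradient_logLog_ae_eq hE).symm

theorem setIntegral_sq_norm_gradient_logLog (hE : finrank ℝ E = 2) :
    ∫ x in ball (0 : E) 1, ‖∇ logLog x‖ ^ 2 ∂μ = μ.toSphere.real univ := by
  have : Nontrivial E := nontrivial_of_finrank_eq_succ hE
  rw [integral_congr_ae (sq_norm_gradient_logLog_ae_eq hE),
    setIntegral_ball_fun_norm_div_pow μ integrableOn_sq_logLogFlux_div,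
    setIntegral_sq_logLogFlux_div, mul_one]

theorem setIntegral_fderiv_gradient_logLog (hE : finrank ℝ E = 2) {φ : E → ℝ}
    (hφ : ContDiff ℝ 1 φ) (hφc : HasCompactSupport φ) (hφ1 : tsupport φ ⊆ ball 0 1) :
    ∫ x in ball 0 1, fderiv ℝ φ x (∇ logLog x) ∂μ =
      ∫ x in ball 0 1, ‖∇ logLog x‖ ^ 2 * φ x ∂μ := by
  have : Nontrivial E := nontrivial_of_finrank_eq_succ hE
  calc ∫ x in ball 0 1, fderiv ℝ φ x (∇ logLog x) ∂μ
      = ∫ x in ball 0 1, logLogFlux ‖x‖ / ‖x‖ ^ (finrank ℝ E - 1) *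
          fderiv ℝ φ x (‖x‖⁻¹ • x) ∂μ := by
        refine integral_congr_ae ?_
        filter_upwards [ae_restrict_mem_diff_singleton measurableSet_ball 0] with x hx
        rw [(hasGradientAt_logLog hx).gradient, map_smul, smul_eq_mul, hE, pow_one]
    _ = -∫ x in ball 0 1, -(logLogFlux ‖x‖ ^ 2 / ‖x‖) / ‖x‖ ^ (finrank ℝ E - 1) * φ x ∂μ := by
        simpa using setIntegral_ball_radial_flux μ zero_lt_one (fun _ ↦ hasDerivAt_logLogFlux)
          tendsto_logLogFlux_zero integrableOn_logLogFlux integrableOn_sq_logLogFlux_div.neg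
          hφ hφc hφ1
    _ = ∫ x in ball 0 1, (logLogFlux ‖x‖ ^ 2 / ‖x‖) / ‖x‖ ^ (finrank ℝ E - 1) * φ x ∂μ := by
        simp only [neg_div, neg_mul, integral_neg, neg_neg]
    _ = ∫ x in ball 0 1, ‖∇ logLog x‖ ^ 2 * φ x ∂μ :=
        integral_congr_ae ((sq_norm_gradient_logLog_ae_eq hE).symm.mul .rfl)

theorem measurable_gradient (f : E → ℝ) : Measurable (∇ f) :=
  (InnerProductSpace.toDual ℝ E).symm.continuous.measurable.comp (measurable_fderiv ℝ f)

theorem integrableOn_gradient_logLog (hE : finrank ℝ E = 2) :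
    IntegrableOn (∇ (logLog : E → ℝ)) (ball 0 1) μ := by
  have := isFiniteMeasure_restrict.2 (measure_ball_lt_top (μ := μ) (x := 0) (r := 1)).ne
  exact ((memLp_two_iff_integrable_sq_norm (measurable_gradient _).aestronglyMeasurable).2
    (integrableOn_sq_norm_gradient_logLog hE)).integrable one_le_two

theorem setIntegral_logLog_mul_fderiv (hE : finrank ℝ E = 2) {φ : E → ℝ}
    (hφ : ContDiff ℝ 1 φ) (hφc : HasCompactSupport φ) (hφ1 : tsupport φ ⊆ ball 0 1) (v : E) :
    ∫ x in ball 0 1, logLog x * fderiv ℝ φ x v ∂μ =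
      -∫ x in ball 0 1, fderiv ℝ logLog x v * φ x ∂μ := by
  have : Nontrivial E := nontrivial_of_finrank_eq_succ hE
  have hderiv : IntegrableOn (fderiv ℝ logLog · v) (ball 0 1) μ := by
    simpa only [IntegrableOn, ← toDual_gradient, InnerProductSpace.toDual_apply_apply]
      using (integrableOn_gradient_logLog hE).inner_const v
  exact setIntegral_mul_fderiv_eq_neg_fderiv_mul_off_countable (by omega) (countable_singleton 0)
    (fun x hx ↦ (hasGradientAt_logLog hx).differentiableAt) (integrableOn_logLog μ) hderiv
    hφ hφc hφ1

end Plane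

section ProductIntegrable

variable {X Y : Type*} [TopologicalSpace X] [T2Space X] [SecondCountableTopology X]
  [MeasurableSpace X] [BorelSpace X] [TopologicalSpace Y] [SecondCountableTopology Y]
  [MeasurableSpace Y] [OpensMeasurableSpace Y] {μ : Measure X} [IsFiniteMeasureOnCompacts μ]
  {ν : Measure Y}

theorem integrable_prod_clm_apply_snd {G H : Type*} [NormedAddCommGroup G] [NormedSpace ℝ G]
    [NormedAddCommGroup H] [NormedSpace ℝ H]
    {f : Y → G} (hf : Integrable f ν) {L : X × Y → G →L[ℝ] H} (hL : Continuous L)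
    (hLc : HasCompactSupport L) : Integrable (fun z ↦ L z (f z.2)) (μ.prod ν) := by
  obtain ⟨C, hC⟩ := hLc.exists_bound_of_continuous hL
  set K : Set X := Prod.fst '' tsupport L
  have hK : IsCompact K := hLc.isCompact.image continuous_fst
  have hbound : Integrable (fun z : X × Y ↦ K.indicator (fun _ ↦ C) z.1 * ‖f z.2‖) (μ.prod ν) :=
    ((integrable_indicator_iff hK.measurableSet).2
      (integrableOn_const hK.measure_lt_top.ne)).mul_prod hf.norm
  refine hbound.mono' ((ContinuousLinearMap.id ℝ (G →L[ℝ] H)).aestronglyMeasurable_comp₂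
    hL.aestronglyMeasurable hf.aestronglyMeasurable.comp_snd) (.of_forall fun z ↦ ?_)
  by_cases hz : z ∈ tsupport L
  · rw [indicator_of_mem (mem_image_of_mem _ hz)]
    exact (L z).le_of_opNorm_le (hC z) _
  · have hzero : L z = 0 := image_eq_zero_of_notMem_tsupport hz
    have hC0 : 0 ≤ C := (norm_nonneg _).trans (hC z)
    simpa [hzero] using mul_nonneg (indicator_nonneg (fun _ _ ↦ hC0) z.1) (norm_nonneg (f z.2))

theorem integrable_prod_snd_mul
    {f : Y → ℝ} (hf : Integrable f ν) {c : X × Y → ℝ} (hc : Continuous c)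
    (hcc : HasCompactSupport c) : Integrable (fun z ↦ f z.2 * c z) (μ.prod ν) := by
  simpa [mul_comm] using integrable_prod_clm_apply_snd (μ := μ) hf
    ((ContinuousLinearMap.mul ℝ ℝ).continuous.comp hc) (hcc.comp_left (map_zero _))

end ProductIntegrable

section SpaceTime

variable {E F : Type*} [NormedAddCommGroup E] [NormedSpace ℝ E] [NormedAddCommGroup F]
  [NormedSpace ℝ F]

/-- The test functions `C_c^∞(Ω)`, as functions on the whole space supported in `Ω`. -/
structure IsTestFunction (Ω : Set E) (φ : E → ℝ) : Prop where
  contDiff : ContDiff ℝ (⊤ : ℕ∞) φ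
  hasCompactSupport : HasCompactSupport φ
  tsupport_subset : tsupport φ ⊆ Ω

namespace IsTestFunction

theorem comp_isClosedEmbedding {Ω : Set E} {φ : E → ℝ} (hφ : IsTestFunction Ω φ) {e : F → E}
    (he : ContDiff ℝ (⊤ : ℕ∞) e) (hec : IsClosedEmbedding e) :
    IsTestFunction (e ⁻¹' Ω) (φ ∘ e) where
  contDiff := hφ.contDiff.comp he
  hasCompactSupport := hφ.hasCompactSupport.comp_isClosedEmbedding hec
  tsupport_subset := (tsupport_comp_subset_preimage φ he.continuous).trans
    (preimage_mono hφ.tsupport_subset)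

theorem mono {Ω Ω' : Set E} {φ : E → ℝ} (hφ : IsTestFunction Ω φ) (h : Ω ⊆ Ω') :
    IsTestFunction Ω' φ :=
  ⟨hφ.contDiff, hφ.hasCompactSupport, hφ.tsupport_subset.trans h⟩

theorem setIntegral_deriv_eq_zero {I : Set ℝ} {φ : ℝ → ℝ} (hφ : IsTestFunction I φ) :
    ∫ t in I, deriv φ t = 0 := by
  have hcompl (t : ℝ) (ht : t ∉ I) : deriv φ t = 0 :=
    image_eq_zero_of_notMem_tsupport fun h ↦ ht (hφ.tsupport_subset (tsupport_deriv_subset h))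
  rw [setIntegral_eq_integral_of_forall_compl_eq_zero hcompl]
  exact integral_eq_zero_of_hasDerivAt_of_integrable
    (fun t ↦ (hφ.contDiff.differentiable (by simp) t).hasDerivAt)
    ((hφ.contDiff.continuous_deriv (by simp)).integrable_of_hasCompactSupport
      hφ.hasCompactSupport.deriv)
    (hφ.contDiff.continuous.integrable_of_hasCompactSupport hφ.hasCompactSupport)

variable {I : Set F} {Ω : Set E} {ψ : F × E → ℝ}

theorem slice_left (hψ : IsTestFunction (I ×ˢ Ω) ψ) (y : E) : IsTestFunction I (ψ ⟨·, y⟩) :=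
  (hψ.comp_isClosedEmbedding (contDiff_prodMk_left y)
    (Function.LeftInverse.isClosedEmbedding (f := Prod.fst) (fun _ ↦ rfl) continuous_fst
      (by fun_prop))).mono fun _ ht ↦ ht.1

theorem slice_right (hψ : IsTestFunction (I ×ˢ Ω) ψ) (t : F) : IsTestFunction Ω (ψ ⟨t, ·⟩) :=
  (hψ.comp_isClosedEmbedding (contDiff_prodMk_right t)
    (Function.LeftInverse.isClosedEmbedding (f := Prod.snd) (fun _ ↦ rfl) continuous_snd
      (by fun_prop))).mono fun _ hy ↦ hy.2

theorem fderiv_slice_right (hψ : IsTestFunction (I ×ˢ Ω) ψ) (z : F × E) :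
    fderiv ℝ (ψ ⟨z.1, ·⟩) z.2 = (fderiv ℝ ψ z).comp (.inr ℝ F E) :=
  ((hψ.contDiff.differentiable (by simp) z).hasFDerivAt.comp z.2
    (hasFDerivAt_prodMk_right z.1 z.2)).fderiv

theorem deriv_slice_left {I : Set ℝ} {ψ : ℝ × E → ℝ} (hψ : IsTestFunction (I ×ˢ Ω) ψ)
    (z : ℝ × E) : deriv (ψ ⟨·, z.2⟩) z.1 = fderiv ℝ ψ z (1, 0) :=
  ((hψ.contDiff.differentiable (by simp) z).hasFDerivAt.comp_hasDerivAt z.1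
    ((hasDerivAt_id z.1).prodMk (hasDerivAt_const z.1 z.2))).deriv

end IsTestFunction

variable [SecondCountableTopology E] [MeasurableSpace E] [BorelSpace E] {μ : Measure E}
  [SFinite μ] {I : Set ℝ} {Ω : Set E} {ψ : ℝ × E → ℝ}

theorem IsTestFunction.setIntegral_prod_stationary {u d : E → ℝ} {V : E → E}
    (hu : IntegrableOn u Ω μ) (hV : IntegrableOn V Ω μ) (hd : IntegrableOn d Ω μ)
    (hdiv : ∀ φ, IsTestFunction Ω φ →
      ∫ x in Ω, fderiv ℝ φ x (V x) ∂μ = ∫ x in Ω, d x * φ x ∂μ)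
    (hψ : IsTestFunction (I ×ˢ Ω) ψ) :
    ∫ z in I ×ˢ Ω, (-(u z.2 * deriv (ψ ⟨·, z.2⟩) z.1) + fderiv ℝ (ψ ⟨z.1, ·⟩) z.2 (V z.2)
      - d z.2 * ψ z) ∂volume.prod μ = 0 := by
  have hψ' : Continuous (fderiv ℝ ψ) := hψ.contDiff.continuous_fderiv (by simp)
  have hψ'c : HasCompactSupport (fderiv ℝ ψ) := hψ.hasCompactSupport.fderiv ℝ
  have htime : Integrable (fun z : ℝ × E ↦ u z.2 * deriv (ψ ⟨·, z.2⟩) z.1)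
      ((volume.restrict I).prod (μ.restrict Ω)) := by
    simp only [hψ.deriv_slice_left]
    exact integrable_prod_snd_mul hu (hψ'.clm_apply continuous_const)
      (hψ.hasCompactSupport.fderiv_apply ℝ _)
  have hspace : Integrable (fun z : ℝ × E ↦ fderiv ℝ (ψ ⟨z.1, ·⟩) z.2 (V z.2))
      ((volume.restrict I).prod (μ.restrict Ω)) := by
    simp only [hψ.fderiv_slice_right]
    exact integrable_prod_clm_apply_snd hV (hψ'.clm_comp continuous_const)
      (hψ'c.comp_left (g := fun L : ℝ × E →L[ℝ] ℝ ↦ L.comp (.inr ℝ ℝ E))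
        (ContinuousLinearMap.zero_comp _))
  have hsource : Integrable (fun z : ℝ × E ↦ d z.2 * ψ z)
      ((volume.restrict I).prod (μ.restrict Ω)) :=
    integrable_prod_snd_mul hd hψ.contDiff.continuous hψ.hasCompactSupport
  rw [← Measure.prod_restrict, integral_sub (by exact htime.neg.add hspace) hsource,
    integral_add (by exact htime.neg) hspace, integral_neg, integral_prod_symm _ htime,
    integral_prod _ hspace, integral_prod _ hsource]
  simp only [integral_const_mul, (hψ.slice_left _).setIntegral_deriv_eq_zero, mul_zero,
    integral_zero, neg_zero, zero_add, hdiv _ (hψ.slice_right _), sub_self]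

end SpaceTime

theorem pd_eq_gradient_apply (i : Fin 2) (g : EuclideanSpace ℝ (Fin 2) → ℝ)
    (x : EuclideanSpace ℝ (Fin 2)) : pd i g x = ∇ g x i := by
  rw [pd, ← toDual_gradient, InnerProductSpace.toDual_apply_apply,
    EuclideanSpace.inner_single_right]
  simp

theorem sum_pd_mul_pd (u φ : EuclideanSpace ℝ (Fin 2) → ℝ) (x : EuclideanSpace ℝ (Fin 2)) :
    ∑ i, pd i u x * pd i φ x = fderiv ℝ φ x (∇ u x) := by
  simp only [pd_eq_gradient_apply]
  rw [← toDual_gradient, InnerProductSpace.toDual_apply_apply, PiLp.inner_apply]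
  rfl

theorem sum_sq_pd (u : EuclideanSpace ℝ (Fin 2) → ℝ) (x : EuclideanSpace ℝ (Fin 2)) :
    ∑ i, pd i u x ^ 2 = ‖∇ u x‖ ^ 2 := by
  simp only [pd_eq_gradient_apply, EuclideanSpace.real_norm_sq_eq]

theorem toSphere_real_univ_euclideanSpace_fin_two :
    (volume : Measure (EuclideanSpace ℝ (Fin 2))).toSphere.real univ = 2 * Real.pi := by
  simp [measureReal_def, EuclideanSpace.volume_ball_fin_two, Real.pi_nonneg]

/-- `u₀(x) = ln(1 − ln|x|)` belongs to `W^{1,2}(B₁(0)) ⊂ ℝ²`, with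
`∫_{B₁} |∇u₀|² = 2π`, it satisfies `−Δu₀ = |∇u₀|²` distributionally on the whole
disk, and hence `u(t,x) = u₀(x)` is a stationary weak solution of
`∂ₜu − Δu = |∇u|²` on `(0,∞) × B₁(0)`. -/
theorem statement_16
    (u₀ : EuclideanSpace ℝ (Fin 2) → ℝ)
    (hu₀ : ∀ x, u₀ x = Real.log (1 - Real.log ‖x‖)) :
    -- u₀ ∈ W^{1,2}(B₁(0))
    IntegrableOn (fun x => (u₀ x) ^ 2) (ball (0 : EuclideanSpace ℝ (Fin 2)) 1) ∧
    IntegrableOn (fun x => ∑ i, (pd i u₀ x) ^ 2)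
      (ball (0 : EuclideanSpace ℝ (Fin 2)) 1) ∧
    -- the pointwise partial derivatives are the weak derivatives on the ball
    (∀ φ : EuclideanSpace ℝ (Fin 2) → ℝ, ContDiff ℝ (⊤ : ℕ∞) φ →
      HasCompactSupport φ →
      tsupport φ ⊆ ball (0 : EuclideanSpace ℝ (Fin 2)) 1 →
      ∀ i : Fin 2,
        (∫ x in ball (0 : EuclideanSpace ℝ (Fin 2)) 1, u₀ x * pd i φ x) =
          -∫ x in ball (0 : EuclideanSpace ℝ (Fin 2)) 1, pd i u₀ x * φ x) ∧
    -- energy identity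
    (∫ x in ball (0 : EuclideanSpace ℝ (Fin 2)) 1, ∑ i, (pd i u₀ x) ^ 2) =
      2 * Real.pi ∧
    -- −Δu₀ = |∇u₀|² distributionally on the whole disk
    (∀ φ : EuclideanSpace ℝ (Fin 2) → ℝ, ContDiff ℝ (⊤ : ℕ∞) φ →
      HasCompactSupport φ →
      tsupport φ ⊆ ball (0 : EuclideanSpace ℝ (Fin 2)) 1 →
      (∫ x in ball (0 : EuclideanSpace ℝ (Fin 2)) 1,
          ∑ i, pd i u₀ x * pd i φ x) =
        ∫ x in ball (0 : EuclideanSpace ℝ (Fin 2)) 1,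
          (∑ i, (pd i u₀ x) ^ 2) * φ x) ∧
    -- consequently, u(t,x) = u₀(x) is a stationary weak solution of
    -- ∂ₜu − Δu = |∇u|² on (0,∞) × B₁(0)
    (∀ ψ : ℝ × EuclideanSpace ℝ (Fin 2) → ℝ, ContDiff ℝ (⊤ : ℕ∞) ψ →
      HasCompactSupport ψ →
      tsupport ψ ⊆ Ioi (0:ℝ) ×ˢ ball (0 : EuclideanSpace ℝ (Fin 2)) 1 →
      (∫ z in Ioi (0:ℝ) ×ˢ ball (0 : EuclideanSpace ℝ (Fin 2)) 1,
          (-(u₀ z.2 * pT ψ z) + (∑ i, pd i u₀ z.2 * pd i (fun y => ψ (z.1, y)) z.2)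
            - (∑ i, (pd i u₀ z.2) ^ 2) * ψ z)) = 0) := by
  obtain rfl : u₀ = logLog := funext hu₀
  have hdim : finrank ℝ (EuclideanSpace ℝ (Fin 2)) = 2 := finrank_euclideanSpace_fin
  have hC1 {φ : EuclideanSpace ℝ (Fin 2) → ℝ} (hφ : ContDiff ℝ (⊤ : ℕ∞) φ) : ContDiff ℝ 1 φ :=
    hφ.of_le (by simp)
  simp only [sum_pd_mul_pd, sum_sq_pd]
  refine ⟨integrableOn_sq_logLog volume, integrableOn_sq_norm_gradient_logLog hdim, ?weak,
    ?energy, ?distributional, ?stationary⟩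
  case weak => exact fun φ hφ hφc hφ1 i ↦
    setIntegral_logLog_mul_fderiv hdim (hC1 hφ) hφc hφ1 (EuclideanSpace.single i 1)
  case energy =>
    rw [setIntegral_sq_norm_gradient_logLog hdim, toSphere_real_univ_euclideanSpace_fin_two]
  case distributional => exact fun φ hφ hφc hφ1 ↦
    setIntegral_fderiv_gradient_logLog hdim (hC1 hφ) hφc hφ1
  case stationary =>
    intro ψ hψ hψc hψ1
    have hψ : IsTestFunction (Ioi 0 ×ˢ ball 0 1) ψ := ⟨hψ, hψc, hψ1⟩
    exact hψ.setIntegral_prod_stationary (integrableOn_logLog volume)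
      (integrableOn_gradient_logLog hdim) (integrableOn_sq_norm_gradient_logLog hdim)
      fun φ hφ ↦ setIntegral_fderiv_gradient_logLog hdim (hC1 hφ.contDiff) hφ.hasCompactSupport
        hφ.tsupport_subset
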